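/- Let s ≥ 1 and k ∈ ℤ^s_{≥1}. There is a bijection between the set of faces of Γ_k and the set of pairs (w, σ) where w ∈ W_{s−1} and σ is a face of Γ_{r_w(k)*w̃}, given by (w, σ) ↦ σ ∪ g_w; under this bijection the dimension of the face σ ∪ g_w of Γ_k equals |w| + dim σ. (The number of zero-dimensional faces hence satisfies V_k = Σ_{w ∈ W_{s−1}, |w| = 0} V_{r_w(k)}, which is the coefficient-wise form of the Gusev–Kiritchenko–Timorin partial differential equation for the exponential generating function of vertex numbers.) -/

import Mathlib

open Classical

noncomputable section

/-- Partial sums of the (0-indexed) sequence `k`: `nseq k i = k 0 + ⋯ + k (i-1)`;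
so `nseq k i` is the paper's `n_i` for the sequence `(k_1, …, k_s) = (k 0, …, k (s-1))`. -/
def nseq (k : ℕ → ℕ) (i : ℕ) : ℕ := ∑ j ∈ Finset.range i, k j

/-- The set of terminal vertices `T_k = {(n_i, n - n_i) : 0 ≤ i ≤ s}` of the ladder diagram. -/
def terminals (s : ℕ) (k : ℕ → ℕ) : Set (ℕ × ℕ) :=
  {v | ∃ i ≤ s, v = (nseq k i, nseq k s - nseq k i)}

/-- The vertex set of the ladder diagram `Γ_k`. -/
def ladderV (s : ℕ) (k : ℕ → ℕ) : Set (ℕ × ℕ) :=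
  {v | ∃ t ∈ terminals s k, v.1 ≤ t.1 ∧ v.2 ≤ t.2}

/-- A unit grid step: one step to the right or one step up. -/
def gridStep (v w : ℕ × ℕ) : Prop :=
  w = (v.1 + 1, v.2) ∨ w = (v.1, v.2 + 1)

/-- The edge set of the ladder diagram `Γ_k`. -/
def ladderE (s : ℕ) (k : ℕ → ℕ) : Set ((ℕ × ℕ) × (ℕ × ℕ)) :=
  {e | e.1 ∈ ladderV s k ∧ e.2 ∈ ladderV s k ∧ gridStep e.1 e.2}

/-- A combinatorial (directed) graph in the grid `ℤ_{≥0} × ℤ_{≥0}`,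
given by a set of vertices and a set of edges. -/
@[ext] structure LGraph where
  V : Set (ℕ × ℕ)
  E : Set ((ℕ × ℕ) × (ℕ × ℕ))

/-- Subgraph inclusion order on grid graphs. -/
instance : PartialOrder LGraph where
  le γ γ' := γ.V ⊆ γ'.V ∧ γ.E ⊆ γ'.E
  le_refl γ := ⟨subset_rfl, subset_rfl⟩
  le_trans a b c h h' := ⟨h.1.trans h'.1, h.2.trans h'.2⟩
  le_antisymm a b h h' := LGraph.ext (subset_antisymm h.1 h'.1) (subset_antisymm h.2 h'.2)

/-- The ladder diagram `Γ_k` as a grid graph. -/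
def ladder (s : ℕ) (k : ℕ → ℕ) : LGraph :=
  ⟨ladderV s k, ladderE s k⟩

/-- A positive path: (the graph of) a shortest path in the ladder diagram `Γ_k`
from the origin `(0,0)` to a terminal vertex. -/
def IsPositivePath (s : ℕ) (k : ℕ → ℕ) (p : LGraph) : Prop :=
  ∃ (m : ℕ) (f : ℕ → ℕ × ℕ),
    f 0 = (0, 0) ∧ f m ∈ terminals s k ∧
    (∀ i < m, gridStep (f i) (f (i + 1))) ∧
    (∀ i ≤ m, f i ∈ ladderV s k) ∧
    p.V = {v | ∃ i ≤ m, v = f i} ∧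
    p.E = {e | ∃ i < m, e = (f i, f (i + 1))}

/-- A face of the ladder diagram `Γ_k`: a subgraph which contains all terminal
vertices and is a union of positive paths. -/
def IsLadderFace (s : ℕ) (k : ℕ → ℕ) (γ : LGraph) : Prop :=
  terminals s k ⊆ γ.V ∧
  ∃ P : Set LGraph, (∀ p ∈ P, IsPositivePath s k p) ∧
    γ.V = ⋃ p ∈ P, LGraph.V p ∧ γ.E = ⋃ p ∈ P, LGraph.E p

/-- The dimension (first Betti number) of a face of a ladder diagram:
`|E(γ)| - |V(γ)| + 1`. -/
def ldim (γ : LGraph) : ℤ :=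
  (γ.E.ncard : ℤ) - (γ.V.ncard : ℤ) + 1

/-- The index set `I = {(i,j) : i,j ≥ 1, i+j ≤ n}` of the coordinates of a
Gelfand–Cetlin pattern. -/
def GCIdx (n : ℕ) : Set (ℕ × ℕ) := {p | 1 ≤ p.1 ∧ 1 ≤ p.2 ∧ p.1 + p.2 ≤ n}

/-- The entries of a Gelfand–Cetlin pattern `x`, extended by the boundary
condition `x_{i, n+1-i} = λ_i`. -/
def gcEntry (n : ℕ) (lam : ℕ → ℝ) (x : GCIdx n → ℝ) (p : ℕ × ℕ) : ℝ :=
  if h : p ∈ GCIdx n then x ⟨p, h⟩ else lam p.1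

/-- The Gelfand–Cetlin polytope `P_λ`: the set of points `(x_{i,j})_{(i,j) ∈ I}`
with `x_{i,j+1} ≥ x_{i,j} ≥ x_{i+1,j}` for all `(i,j) ∈ I`, where
`x_{i,n+1-i} = λ_i`. -/
def GCPoly (n : ℕ) (lam : ℕ → ℝ) : Set (GCIdx n → ℝ) :=
  {x | ∀ i j : ℕ, (i, j) ∈ GCIdx n →
    gcEntry n lam x (i, j) ≤ gcEntry n lam x (i, j + 1) ∧
    gcEntry n lam x (i + 1, j) ≤ gcEntry n lam x (i, j)}

/-- The subset of `P_λ` obtained by turning the inequalities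
`x_{i,j+1} ≥ x_{i,j}` for `(i,j) ∈ SH` and `x_{i,j} ≥ x_{i+1,j}` for
`(i,j) ∈ SV` into equalities. -/
def GCFaceOf (n : ℕ) (lam : ℕ → ℝ) (SH SV : Set (ℕ × ℕ)) : Set (GCIdx n → ℝ) :=
  {x | x ∈ GCPoly n lam ∧
    (∀ p ∈ SH, gcEntry n lam x (p.1, p.2 + 1) = gcEntry n lam x p) ∧
    (∀ p ∈ SV, gcEntry n lam x p = gcEntry n lam x (p.1 + 1, p.2))}

/-- A face of the GC polytope: a nonempty solution set of the system obtained
by replacing some of the defining inequalities by equalities. -/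
def IsGCFace (n : ℕ) (lam : ℕ → ℝ) (F : Set (GCIdx n → ℝ)) : Prop :=
  F.Nonempty ∧ ∃ SH SV : Set (ℕ × ℕ), SH ⊆ GCIdx n ∧ SV ⊆ GCIdx n ∧
    F = GCFaceOf n lam SH SV

/-- The dimension of (a face of) the GC polytope: the dimension of its affine span. -/
def GCdim (n : ℕ) (F : Set (GCIdx n → ℝ)) : ℕ :=
  Module.finrank ℝ (affineSpan ℝ F).direction

/-- `lam` (1-indexed) is weakly decreasing with block structure `k`: it is
constant on each block `(n_{i-1}, n_i]` and strictly decreases between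
consecutive blocks. -/
def HasBlockStructure (s : ℕ) (k : ℕ → ℕ) (lam : ℕ → ℝ) : Prop :=
  (∀ i < s, ∀ a b : ℕ, nseq k i < a → a ≤ b → b ≤ nseq k (i + 1) → lam a = lam b) ∧
  (∀ i : ℕ, 1 ≤ i → i < s → lam (nseq k i + 1) < lam (nseq k i))

/-- The edge set of the graph `φ(F)` associated to a subset `F` of the GC polytope. -/
def phiE (n : ℕ) (lam : ℕ → ℝ) (F : Set (GCIdx n → ℝ)) :
    Set ((ℕ × ℕ) × (ℕ × ℕ)) :=
  {e | (∃ i < n, e = ((0, i), (0, i + 1)) ∨ e = ((i, 0), (i + 1, 0))) ∨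
    (∃ i j : ℕ, (i, j) ∈ GCIdx n ∧ e = ((i - 1, j), (i, j)) ∧
      ∃ x ∈ F, gcEntry n lam x (i, j) < gcEntry n lam x (i, j + 1)) ∨
    (∃ i j : ℕ, (i, j) ∈ GCIdx n ∧ e = ((i, j - 1), (i, j)) ∧
      ∃ x ∈ F, gcEntry n lam x (i + 1, j) < gcEntry n lam x (i, j))}

/-- The graph `φ(F)`: its edges are given by `phiE` and its vertices are the
endpoints of its edges. -/
def phiGC (n : ℕ) (lam : ℕ → ℝ) (F : Set (GCIdx n → ℝ)) : LGraph where
  V := {v | ∃ e ∈ phiE n lam F, v = e.1 ∨ v = e.2}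
  E := phiE n lam F

/-- The map `ψ`: for a subgraph `γ`, the set of points of `P_λ` where the
inequalities corresponding to the missing edges of `γ` become equalities. -/
def psiGC (n : ℕ) (lam : ℕ → ℝ) (γ : LGraph) : Set (GCIdx n → ℝ) :=
  {x | x ∈ GCPoly n lam ∧ ∀ i j : ℕ, (i, j) ∈ GCIdx n →
    (((i - 1, j), (i, j)) ∉ γ.E → gcEntry n lam x (i, j) = gcEntry n lam x (i, j + 1)) ∧
    (((i, j - 1), (i, j)) ∉ γ.E → gcEntry n lam x (i, j) = gcEntry n lam x (i + 1, j))}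
/-- The recursively defined point `x̄` of the proof of Lemma 2.6 (bijectivity):
`x̄_{i,j} = λ_i` if `i + j = n + 1`, and for `i + j ≤ n` it is determined from
`x̄_{i,j+1}` and `x̄_{i+1,j}` according to which of the two edges
`((i-1,j),(i,j))`, `((i,j-1),(i,j))` belong to `E`. -/
def barX (n : ℕ) (lam : ℕ → ℝ) (E : Set ((ℕ × ℕ) × (ℕ × ℕ))) : ℕ → ℕ → ℝ
  | i, j =>
    if h1 : n + 1 ≤ i + j then lam i
    else if h2 : ((i - 1, j), (i, j)) ∈ E then
      if h3 : ((i, j - 1), (i, j)) ∈ E then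
        (barX n lam E i (j + 1) + barX n lam E (i + 1) j) / 2
      else barX n lam E (i + 1) j
    else barX n lam E i (j + 1)
  termination_by i j => n + 1 - (i + j)
  decreasing_by all_goals omega

/-- `α, β : ℕ → ℕ` encode an element
`w = ((α_1,β_1),…,(α_{s-1},β_{s-1})) ∈ W_{s-1}`, with the conventions
`α_0 = 0`, `β_0 = 1`, `α_s = 1`, `β_s = 0`. -/
def IsW (s : ℕ) (α β : ℕ → ℕ) : Prop :=
  (∀ i : ℕ, 1 ≤ i → i < s →
    (α i, β i) = (1, 0) ∨ (α i, β i) = (0, 1) ∨ (α i, β i) = (1, 1)) ∧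
  α 0 = 0 ∧ β 0 = 1 ∧ α s = 1 ∧ β s = 0

/-- The edge set of the subgraph `g_w` of `Γ_k`: the horizontal edge into the
terminal vertex `v_i` when `α_i = 1` and the vertical edge into `v_i` when
`β_i = 1`. -/
def gwE (s : ℕ) (k α β : ℕ → ℕ) : Set ((ℕ × ℕ) × (ℕ × ℕ)) :=
  {e | ∃ i ≤ s,
    (α i = 1 ∧
      e = ((nseq k i - 1, nseq k s - nseq k i), (nseq k i, nseq k s - nseq k i))) ∨
    (β i = 1 ∧
      e = ((nseq k i, nseq k s - nseq k i - 1), (nseq k i, nseq k s - nseq k i)))}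

/-- The subgraph `g_w` of `Γ_k`. -/
def gwGraph (s : ℕ) (k α β : ℕ → ℕ) : LGraph where
  V := {v | ∃ e ∈ gwE s k α β, v = e.1 ∨ v = e.2}
  E := gwE s k α β

/-- The interleaved sequence `r_w(k) * w̃` of length `2s - 1` (0-indexed):
entry `2j` is `k''_{j+1} = k_{j+1} + 1 - α_{j+1} - β_j` and entry `2j + 1` is
`w̃_{j+1} = α_{j+1} β_{j+1}`. -/
def rstar (s : ℕ) (k α β : ℕ → ℕ) (t : ℕ) : ℕ :=
  if t % 2 = 0 then k (t / 2) + 1 - α (t / 2 + 1) - β (t / 2)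
  else α (t / 2 + 1) * β (t / 2 + 1)

/-- `α`-value of one of the three symbols `(1,0), (0,1), (1,1)`,
encoded as `0, 1, 2 : Fin 3` respectively. -/
def aW3 (c : Fin 3) : ℕ := if c = 1 then 0 else 1

/-- `β`-value of one of the three symbols `(1,0), (0,1), (1,1)`,
encoded as `0, 1, 2 : Fin 3` respectively. -/
def bW3 (c : Fin 3) : ℕ := if c = 0 then 0 else 1

/-- The function `α` of the element of `W_{s-1}` encoded by
`c : Fin (s-1) → Fin 3` (with the conventions `α_0 = 0`, `α_s = 1`). -/
def alph (s : ℕ) (c : Fin (s - 1) → Fin 3) (i : ℕ) : ℕ :=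
  if i = 0 then 0 else if h : i - 1 < s - 1 then aW3 (c ⟨i - 1, h⟩) else 1

/-- The function `β` of the element of `W_{s-1}` encoded by
`c : Fin (s-1) → Fin 3` (with the conventions `β_0 = 1`, `β_s = 0`). -/
def bet (s : ℕ) (c : Fin (s - 1) → Fin 3) (i : ℕ) : ℕ :=
  if i = 0 then 1 else if h : i - 1 < s - 1 then bW3 (c ⟨i - 1, h⟩) else 0

/-- The interleaved sequence `r_w(k) * w̃` (of length `2s - 1`, 0-indexed) for
the element `w ∈ W_{s-1}` encoded by `c`. -/
def newk (s : ℕ) (c : Fin (s - 1) → Fin 3) (k : ℕ → ℕ) (t : ℕ) : ℕ :=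
  if t % 2 = 0 then k (t / 2) + 1 - alph s c (t / 2 + 1) - bet s c (t / 2)
  else alph s c (t / 2 + 1) * bet s c (t / 2 + 1)

/-- `|w| = Σ_{i=1}^{s-1} α_i β_i` for the element `w ∈ W_{s-1}` encoded by `c`. -/
def wsize (s : ℕ) (c : Fin (s - 1) → Fin 3) : ℕ :=
  ∑ j ∈ Finset.range (s - 1), alph s c (j + 1) * bet s c (j + 1)

/-- The subgraph `g_w` of `Γ_k` for the element `w ∈ W_{s-1}` encoded by `c`. -/
def gwGraph3 (s : ℕ) (k : ℕ → ℕ) (c : Fin (s - 1) → Fin 3) : LGraph :=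
  gwGraph s k (alph s c) (bet s c)

/-- Union of two grid graphs (union of vertex sets and of edge sets). -/
def ugraph (γ δ : LGraph) : LGraph := ⟨γ.V ∪ δ.V, γ.E ∪ δ.E⟩

/-- The generating function `F_k(t) = Σ_{γ face of Γ_k} t^{dim γ}` of the
`f`-vector of the ladder diagram `Γ_k`, as a formal power series in `t`:
the coefficient of `t^d` is the number of faces of `Γ_k` of dimension `d`. -/
def fpol (s : ℕ) (k : ℕ → ℕ) : PowerSeries ℤ :=
  PowerSeries.mk fun d =>
    (Set.ncard {γ : LGraph | IsLadderFace s k γ ∧ ldim γ = (d : ℤ)} : ℤ)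

/-- The operator `Π_{i=1}^{s-1} (∂/∂x_i + ∂/∂x_{i+1} + t ∂/∂y_i)` applied to a
polynomial in the variables `x_1, x_2, … , y_1, y_2, …` (the variable `x_{i+1}`
is `Sum.inl i` and `y_{i+1}` is `Sum.inr i`) over `ℚ[t]`. -/
def Lfold (s : ℕ) (f : MvPolynomial (ℕ ⊕ ℕ) (Polynomial ℚ)) :
    MvPolynomial (ℕ ⊕ ℕ) (Polynomial ℚ) :=
  (List.range (s - 1)).foldl
    (fun g i =>
      MvPolynomial.pderiv (Sum.inl i) g + MvPolynomial.pderiv (Sum.inl (i + 1)) g +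
        (Polynomial.X : Polynomial ℚ) • MvPolynomial.pderiv (Sum.inr i) g) f

/-- The operator `D_w = Π_{i=1}^{s-1} (∂/∂x_i)^{1-α_i} (∂/∂x_{i+1})^{1-β_i}
(t ∂/∂y_i)^{α_i β_i}` for the element `w ∈ W_{s-1}` encoded by
`c : Fin (s-1) → Fin 3` (`0 ↦ (1,0)`, `1 ↦ (0,1)`, `2 ↦ (1,1)`). -/
def DfoldC (s : ℕ) (c : Fin (s - 1) → Fin 3)
    (f : MvPolynomial (ℕ ⊕ ℕ) (Polynomial ℚ)) : MvPolynomial (ℕ ⊕ ℕ) (Polynomial ℚ) :=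
  (List.finRange (s - 1)).foldl
    (fun g i =>
      if c i = 0 then MvPolynomial.pderiv (Sum.inl ((i : ℕ) + 1)) g
      else if c i = 1 then MvPolynomial.pderiv (Sum.inl (i : ℕ)) g
      else (Polynomial.X : Polynomial ℚ) • MvPolynomial.pderiv (Sum.inr (i : ℕ)) g) f

/-- The operator `D_w` for the element `w ∈ W_{s-1}` encoded by `α, β : ℕ → ℕ`. -/
def DfoldW (s : ℕ) (α β : ℕ → ℕ)
    (f : MvPolynomial (ℕ ⊕ ℕ) (Polynomial ℚ)) : MvPolynomial (ℕ ⊕ ℕ) (Polynomial ℚ) :=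
  (List.range (s - 1)).foldl
    (fun g j =>
      if α (j + 1) = 1 ∧ β (j + 1) = 1 then
        (Polynomial.X : Polynomial ℚ) • MvPolynomial.pderiv (Sum.inr j) g
      else if α (j + 1) = 1 then MvPolynomial.pderiv (Sum.inl (j + 1)) g
      else MvPolynomial.pderiv (Sum.inl j) g) f

/-- Substitution of `0` for all the variables `y_j = Sum.inr j`. -/
def setYzero :
    MvPolynomial (ℕ ⊕ ℕ) (Polynomial ℚ) →ₐ[Polynomial ℚ] MvPolynomial (ℕ ⊕ ℕ) (Polynomial ℚ) :=
  MvPolynomial.aeval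
    (Sum.elim (fun i => MvPolynomial.X (Sum.inl i)) fun _ => (0 : MvPolynomial (ℕ ⊕ ℕ) (Polynomial ℚ)))
end

/-!
A face of `Γ_k` is recognised locally: it contains the terminal vertices, every vertex other than
the origin is entered by an edge, and every non-terminal vertex is left by one. Such a graph can
therefore be cut between the antidiagonals `x + y = n - 1` and `x + y = n`. The edges crossing the
cut are exactly the edges of one graph `g_w`, since each terminal vertex `v_i` is entered
horizontally, vertically, or both; what remains below is a face whose terminal vertices are the
sources of the edges of `g_w`, and these are the terminal vertices of `Γ_{r_w(k) * w̃}`.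
Gluing `g_w` back adds `s + 1 + |w|` edges and `s + 1` vertices, hence `|w|` to the dimension.
-/

section Counting

theorem ncard_setOf_le_and_eq_one {s : ℕ} {f : ℕ → ℕ} (hf : ∀ i ≤ s, f i ≤ 1) :
    {i | i ≤ s ∧ f i = 1}.ncard = ∑ i ∈ Finset.range (s + 1), f i := by
  have hcoe : {i | i ≤ s ∧ f i = 1} = ((Finset.range (s + 1)).filter (f · = 1) : Set ℕ) := by
    ext i
    simp
  rw [hcoe, Set.ncard_coe_finset, Finset.card_filter]
  refine Finset.sum_congr rfl fun i hi => ?_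
  have hle := hf i (Finset.mem_range_succ_iff.1 hi)
  split_ifs <;> omega

theorem ncard_setOf_fst_mem_and_snd_mem {ι δ : Type*} (I : Finset ι) {F : ι → Set δ}
    (hF : ∀ i ∈ I, (F i).Finite) :
    {p : ι × δ | p.1 ∈ I ∧ p.2 ∈ F p.1}.ncard = ∑ i ∈ I, (F i).ncard := by
  have hcongr : {p : ι × δ | p.1 ∈ I ∧ p.2 ∈ F p.1} = ⋃ i ∈ (I : Set ι), Prod.mk i '' F i := by
    ext ⟨i, x⟩
    simp [and_comm]
  rw [hcongr, I.finite_toSet.ncard_biUnion (fun i hi => (hF i hi).image _), finsum_mem_coe_finset]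
  · exact Finset.sum_congr rfl fun i _ => Set.ncard_image_of_injective _ (Prod.mk_right_injective i)
  · intro i _ j _ hij
    refine Set.disjoint_left.2 ?_
    rintro _ ⟨x, -, rfl⟩ ⟨y, -, h⟩
    exact hij (congrArg Prod.fst h).symm

end Counting

section Walks

variable {α : Type*} {E : Set (α × α)} {f g : ℕ → α} {a m b : ℕ}

/-- The sequence `f` is a directed walk along the arcs `E` between the indices `a` and `b`.
No condition is imposed if `b ≤ a`. -/
def IsWalk (E : Set (α × α)) (f : ℕ → α) (a b : ℕ) : Prop :=
  ∀ i, a ≤ i → i < b → (f i, f (i + 1)) ∈ E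

theorem IsWalk.of_le (h : b ≤ a) : IsWalk E f a b :=
  fun _ hai hib => absurd (h.trans hai) hib.not_ge

theorem IsWalk.mono {E' : Set (α × α)} (hf : IsWalk E f a b) (hE : E ⊆ E') : IsWalk E' f a b :=
  fun i hai hib => hE (hf i hai hib)

theorem IsWalk.append (hf : IsWalk E f a m) (hg : IsWalk E g (m + 1) b)
    (hfg : (f m, g (m + 1)) ∈ E) : IsWalk E (fun i => if i ≤ m then f i else g i) a b := by
  intro i hai hib
  rcases lt_trichotomy i m with him | rfl | hmi
  · simpa only [if_pos him.le, if_pos (Nat.succ_le_of_lt him)] using hf i hai him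
  · simpa only [le_refl, if_true, Nat.not_succ_le_self, if_false] using hfg
  · simpa only [if_neg hmi.not_ge, if_neg (Nat.lt_succ_of_lt hmi).not_ge] using hg i hmi hib

end Walks

section GridWalks

variable {u v : ℕ × ℕ} {f : ℕ → ℕ × ℕ} {n : ℕ}

theorem gridStep.level_eq (h : gridStep u v) : v.1 + v.2 = u.1 + u.2 + 1 := by
  rcases h with rfl | rfl <;> dsimp only <;> omega

theorem gridStep.le (h : gridStep u v) : u ≤ v := by
  rcases h with rfl | rfl <;> simp [Prod.le_def]

theorem IsWalk.level_eq (hf : IsWalk {e | gridStep e.1 e.2} f 0 n) (h0 : f 0 = (0, 0)) :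
    ∀ i ≤ n, (f i).1 + (f i).2 = i
  | 0, _ => by simp [h0]
  | i + 1, hi => by
    rw [gridStep.level_eq (hf i i.zero_le hi), hf.level_eq h0 i (Nat.le_of_succ_le hi)]

theorem IsWalk.le_end (hf : IsWalk {e | gridStep e.1 e.2} f 0 n) {i : ℕ} (hi : i ≤ n) :
    f i ≤ f n := by
  induction hi using Nat.decreasingInduction with
  | self => exact le_rfl
  | of_succ j hj ih => exact (gridStep.le (hf j j.zero_le hj)).trans ih

/-- The graph traced out by `f 0, …, f n`. -/
def walkGraph (f : ℕ → ℕ × ℕ) (n : ℕ) : LGraph :=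
  ⟨f '' Set.Iic n, (fun i => (f i, f (i + 1))) '' Set.Iio n⟩

theorem walkGraph_V_subset {γ : LGraph} (hE : ∀ e ∈ γ.E, e.1 ∈ γ.V) (hf : IsWalk γ.E f 0 n)
    (hn : f n ∈ γ.V) : (walkGraph f n).V ⊆ γ.V := by
  rintro _ ⟨i, hi, rfl⟩
  rcases (Set.mem_Iic.1 hi).eq_or_lt with rfl | hlt
  · exact hn
  · exact hE _ (hf i i.zero_le hlt)

theorem walkGraph_E_subset {E : Set ((ℕ × ℕ) × (ℕ × ℕ))} (hf : IsWalk E f 0 n) :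
    (walkGraph f n).E ⊆ E := by
  rintro _ ⟨i, hi, rfl⟩
  exact hf i i.zero_le hi

end GridWalks

section Terminals

variable {s : ℕ} {k : ℕ → ℕ}

theorem nseq_succ (k : ℕ → ℕ) (i : ℕ) : nseq k (i + 1) = nseq k i + k i :=
  Finset.sum_range_succ _ _

theorem nseq_mono (k : ℕ → ℕ) : Monotone (nseq k) :=
  monotone_nat_of_le_succ fun i => nseq_succ k i ▸ Nat.le_add_right _ _

theorem nseq_strictMonoOn (hk : ∀ i < s, 0 < k i) : StrictMonoOn (nseq k) (Set.Iic s) :=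
  strictMonoOn_Iic_of_lt_succ fun i hi => by
    rw [Order.succ_eq_add_one, nseq_succ]
    exact Nat.lt_add_of_pos_right (hk i hi)

theorem nseq_pos (hk : ∀ i < s, 0 < k i) {i : ℕ} (hi0 : 0 < i) (hi : i ≤ s) : 0 < nseq k i :=
  nseq_strictMonoOn hk (Set.mem_Iic.2 (Nat.zero_le s)) hi hi0

theorem nseq_lt_last (hk : ∀ i < s, 0 < k i) {i : ℕ} (hi : i < s) : nseq k i < nseq k s :=
  nseq_strictMonoOn hk (Set.mem_Iic.2 hi.le) (Set.mem_Iic.2 le_rfl) hi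

/-- The terminal vertex `v_i` of `Γ_k`. -/
def terminal (s : ℕ) (k : ℕ → ℕ) (i : ℕ) : ℕ × ℕ := (nseq k i, nseq k s - nseq k i)

theorem terminals_eq_image : terminals s k = terminal s k '' Set.Iic s := by
  ext v
  simp only [terminals, terminal, Set.mem_ofPred_eq, Set.mem_image, Set.mem_Iic, eq_comm (b := v)]

theorem terminal_mem {i : ℕ} (hi : i ≤ s) : terminal s k i ∈ terminals s k := ⟨i, hi, rfl⟩

theorem terminal_injOn (hk : ∀ i < s, 0 < k i) : Set.InjOn (terminal s k) (Set.Iic s) :=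
  fun _ hi _ hj h => (nseq_strictMonoOn hk).injOn hi hj (congrArg Prod.fst h)

theorem mem_terminals_iff {v : ℕ × ℕ} :
    v ∈ terminals s k ↔ v.1 + v.2 = nseq k s ∧ ∃ i ≤ s, v.1 = nseq k i := by
  constructor
  · rintro ⟨i, hi, rfl⟩
    exact ⟨Nat.add_sub_cancel' (nseq_mono k hi), i, hi, rfl⟩
  · rintro ⟨hv, i, hi, hvi⟩
    exact ⟨i, hi, Prod.ext hvi (by dsimp only; omega)⟩

theorem ncard_terminals (hk : ∀ i < s, 0 < k i) : (terminals s k).ncard = s + 1 := by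
  rw [terminals_eq_image, (terminal_injOn hk).ncard_image, ← Finset.coe_Iic, Set.ncard_coe_finset,
    Nat.card_Iic]

theorem isPositivePath_iff {p : LGraph} :
    IsPositivePath s k p ↔ ∃ f : ℕ → ℕ × ℕ, f 0 = (0, 0) ∧ f (nseq k s) ∈ terminals s k ∧
      IsWalk {e | gridStep e.1 e.2} f 0 (nseq k s) ∧ p = walkGraph f (nseq k s) := by
  constructor
  · rintro ⟨m, f, h0, hm, hstep, -, hV, hE⟩
    have hf : IsWalk {e | gridStep e.1 e.2} f 0 m := fun i _ hi => hstep i hi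
    obtain rfl : m = nseq k s := (hf.level_eq h0 m le_rfl).symm.trans (mem_terminals_iff.1 hm).1
    refine ⟨f, h0, hm, hf, LGraph.ext ?_ ?_⟩
    · simp only [hV, walkGraph, Set.image, Set.mem_Iic, eq_comm]
    · simp only [hE, walkGraph, Set.image, Set.mem_Iio, eq_comm]
  · rintro ⟨f, h0, hn, hf, rfl⟩
    refine ⟨nseq k s, f, h0, hn, fun i hi => hf i i.zero_le hi,
      fun i hi => ⟨f (nseq k s), hn, Prod.le_def.1 (hf.le_end hi)⟩, ?_, ?_⟩
    · simp only [walkGraph, Set.image, Set.mem_Iic, eq_comm]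
    · simp only [walkGraph, Set.image, Set.mem_Iio, eq_comm]

end Terminals

/-- The local description of a face with terminal set `T` on the antidiagonal `x + y = n`: apart
from the origin every vertex is entered by an edge, and apart from `T` every vertex is left by one.
Unlike `IsLadderFace`, it makes no reference to paths. -/
structure IsGridFace (n : ℕ) (T : Set (ℕ × ℕ)) (γ : LGraph) : Prop where
  terminals_subset : T ⊆ γ.V
  step : ∀ e ∈ γ.E, gridStep e.1 e.2
  fst_mem : ∀ e ∈ γ.E, e.1 ∈ γ.V
  snd_mem : ∀ e ∈ γ.E, e.2 ∈ γ.V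
  level_le : ∀ v ∈ γ.V, v.1 + v.2 ≤ n
  exists_in : ∀ v ∈ γ.V, v = (0, 0) ∨ ∃ u, (u, v) ∈ γ.E
  exists_out : ∀ v ∈ γ.V, v ∈ T ∨ ∃ w, (v, w) ∈ γ.E

namespace IsGridFace

variable {n : ℕ} {T : Set (ℕ × ℕ)} {γ : LGraph} {u v : ℕ × ℕ}

theorem fst_level_lt (h : IsGridFace n T γ) {e : (ℕ × ℕ) × (ℕ × ℕ)} (he : e ∈ γ.E) :
    e.1.1 + e.1.2 < n :=
  Nat.lt_of_succ_le ((h.step e he).level_eq.symm.trans_le (h.level_le _ (h.snd_mem e he)))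

theorem exists_walk_to (h : IsGridFace n T γ) (hv : v ∈ γ.V) :
    ∃ f : ℕ → ℕ × ℕ, f 0 = (0, 0) ∧ f (v.1 + v.2) = v ∧ IsWalk γ.E f 0 (v.1 + v.2) := by
  induction hm : v.1 + v.2 generalizing v with
  | zero => exact ⟨fun _ => v, Prod.ext (by dsimp only; omega) (by dsimp only; omega), rfl,
      IsWalk.of_le le_rfl⟩
  | succ m ih =>
    rcases h.exists_in v hv with rfl | ⟨u, huv⟩
    · simp at hm
    · have hlevel : v.1 + v.2 = u.1 + u.2 + 1 := (h.step _ huv).level_eq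
      obtain ⟨f, hf0, hfu, hf⟩ := ih (v := u) (h.fst_mem _ huv) (by omega)
      exact ⟨fun i => if i ≤ m then f i else v, by simpa using hf0, by simp,
        hf.append (g := fun _ => v) (IsWalk.of_le le_rfl) (hfu ▸ huv)⟩

theorem exists_walk_from (hT : ∀ v ∈ T, v.1 + v.2 = n) (h : IsGridFace n T γ) (hv : v ∈ γ.V) :
    ∃ g : ℕ → ℕ × ℕ, g (v.1 + v.2) = v ∧ g n ∈ T ∧ IsWalk γ.E g (v.1 + v.2) n := by
  induction hd : n - (v.1 + v.2) using Nat.strong_induction_on generalizing v with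
  | _ d ih =>
    rcases h.exists_out v hv with hvT | ⟨w, hvw⟩
    · exact ⟨fun _ => v, rfl, hvT, IsWalk.of_le (hT v hvT).ge⟩
    · have hlevel : w.1 + w.2 = v.1 + v.2 + 1 := (h.step _ hvw).level_eq
      have hle : w.1 + w.2 ≤ n := h.level_le _ (h.snd_mem _ hvw)
      obtain ⟨g, hgw, hgn, hg⟩ := ih (n - (w.1 + w.2)) (by omega) (h.snd_mem _ hvw) rfl
      dsimp only at hgw hg
      rw [hlevel] at hgw hg
      refine ⟨fun i => if i ≤ v.1 + v.2 then v else g i, if_pos le_rfl, ?_,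
        IsWalk.append (f := fun _ => v) (IsWalk.of_le le_rfl) hg (hgw.symm ▸ hvw)⟩
      simpa only [if_neg (show ¬n ≤ v.1 + v.2 by omega)] using hgn

theorem exists_walk_through_edge (hT : ∀ v ∈ T, v.1 + v.2 = n) (h : IsGridFace n T γ)
    (huv : (u, v) ∈ γ.E) :
    ∃ f : ℕ → ℕ × ℕ, f 0 = (0, 0) ∧ f n ∈ T ∧ IsWalk γ.E f 0 n ∧
      ∃ i < n, f i = u ∧ f (i + 1) = v := by
  have hlevel : v.1 + v.2 = u.1 + u.2 + 1 := (h.step _ huv).level_eq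
  have hle : v.1 + v.2 ≤ n := h.level_le _ (h.snd_mem _ huv)
  obtain ⟨f, hf0, hfu, hf⟩ := h.exists_walk_to (h.fst_mem _ huv)
  obtain ⟨g, hgv, hgn, hg⟩ := h.exists_walk_from hT (h.snd_mem _ huv)
  dsimp only at hfu hf hgv hg
  rw [hlevel] at hgv hg
  refine ⟨fun i => if i ≤ u.1 + u.2 then f i else g i, by simpa using hf0, ?_,
    hf.append hg (by rwa [hfu, hgv]), u.1 + u.2, by omega, by simpa using hfu, by simpa using hgv⟩
  simpa only [if_neg (show ¬n ≤ u.1 + u.2 by omega)] using hgn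

theorem exists_walk_through_vertex (hT : ∀ v ∈ T, v.1 + v.2 = n) (h : IsGridFace n T γ)
    (hv : v ∈ γ.V) :
    ∃ f : ℕ → ℕ × ℕ, f 0 = (0, 0) ∧ f n ∈ T ∧ IsWalk γ.E f 0 n ∧ ∃ i ≤ n, f i = v := by
  rcases h.exists_out v hv with hvT | ⟨w, hvw⟩
  · obtain ⟨f, hf0, hfv, hf⟩ := h.exists_walk_to hv
    rw [hT v hvT] at hfv hf
    exact ⟨f, hf0, hfv.symm ▸ hvT, hf, n, le_rfl, hfv⟩
  · obtain ⟨f, hf0, hfn, hf, i, hi, hfi, -⟩ := h.exists_walk_through_edge hT hvw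
    exact ⟨f, hf0, hfn, hf, i, hi.le, hfi⟩

end IsGridFace

section LocalDescription

variable {s : ℕ} {k : ℕ → ℕ} {γ p : LGraph}

theorem IsPositivePath.isGridFace (hp : IsPositivePath s k p) :
    ∃ t ∈ terminals s k, IsGridFace (nseq k s) {t} p := by
  obtain ⟨f, h0, hn, hf, rfl⟩ := isPositivePath_iff.1 hp
  refine ⟨f (nseq k s), hn, ?_, ?_, ?_, ?_, ?_, ?_, ?_⟩
  · rintro _ rfl
    exact ⟨_, Set.mem_Iic.2 le_rfl, rfl⟩
  · rintro _ ⟨i, hi, rfl⟩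
    exact hf i i.zero_le hi
  · rintro _ ⟨i, hi, rfl⟩
    exact ⟨i, Set.mem_Iic.2 (Set.mem_Iio.1 hi).le, rfl⟩
  · rintro _ ⟨i, hi, rfl⟩
    exact ⟨i + 1, Set.mem_Iic.2 (Set.mem_Iio.1 hi), rfl⟩
  · rintro _ ⟨i, hi, rfl⟩
    exact (hf.level_eq h0 i hi).trans_le hi
  · rintro _ ⟨_ | i, hi, rfl⟩
    · exact Or.inl h0
    · exact Or.inr ⟨f i, i, Set.mem_Iio.2 hi, rfl⟩
  · rintro _ ⟨i, hi, rfl⟩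
    rcases (Set.mem_Iic.1 hi).eq_or_lt with rfl | hlt
    · exact Or.inl rfl
    · exact Or.inr ⟨f (i + 1), i, hlt, rfl⟩

theorem IsLadderFace.isGridFace (h : IsLadderFace s k γ) :
    IsGridFace (nseq k s) (terminals s k) γ := by
  obtain ⟨hT, P, hP, hV, hE⟩ := h
  have mem_V {v} : v ∈ γ.V ↔ ∃ p ∈ P, v ∈ p.V := by simp only [hV, Set.mem_iUnion, exists_prop]
  have mem_E {e} : e ∈ γ.E ↔ ∃ p ∈ P, e ∈ p.E := by simp only [hE, Set.mem_iUnion, exists_prop]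
  have hface (p) (hp : p ∈ P) := (hP p hp).isGridFace
  refine ⟨hT, fun e he => ?_, fun e he => ?_, fun e he => ?_, fun v hv => ?_, fun v hv => ?_,
    fun v hv => ?_⟩
  · obtain ⟨p, hp, hep⟩ := mem_E.1 he
    obtain ⟨t, -, hpt⟩ := hface p hp
    exact hpt.step e hep
  · obtain ⟨p, hp, hep⟩ := mem_E.1 he
    obtain ⟨t, -, hpt⟩ := hface p hp
    exact mem_V.2 ⟨p, hp, hpt.fst_mem e hep⟩
  · obtain ⟨p, hp, hep⟩ := mem_E.1 he
    obtain ⟨t, -, hpt⟩ := hface p hp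
    exact mem_V.2 ⟨p, hp, hpt.snd_mem e hep⟩
  · obtain ⟨p, hp, hvp⟩ := mem_V.1 hv
    obtain ⟨t, -, hpt⟩ := hface p hp
    exact hpt.level_le v hvp
  · obtain ⟨p, hp, hvp⟩ := mem_V.1 hv
    obtain ⟨t, -, hpt⟩ := hface p hp
    exact (hpt.exists_in v hvp).imp_right fun ⟨u, hu⟩ => ⟨u, mem_E.2 ⟨p, hp, hu⟩⟩
  · obtain ⟨p, hp, hvp⟩ := mem_V.1 hv
    obtain ⟨t, ht, hpt⟩ := hface p hp
    exact (hpt.exists_out v hvp).imp (fun hvt : v = t => hvt.symm ▸ ht)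
      fun ⟨w, hw⟩ => ⟨w, mem_E.2 ⟨p, hp, hw⟩⟩

theorem IsGridFace.isPositivePath_walkGraph (h : IsGridFace (nseq k s) (terminals s k) γ)
    {f : ℕ → ℕ × ℕ} (h0 : f 0 = (0, 0)) (hn : f (nseq k s) ∈ terminals s k)
    (hf : IsWalk γ.E f 0 (nseq k s)) :
    IsPositivePath s k (walkGraph f (nseq k s)) ∧ walkGraph f (nseq k s) ≤ γ :=
  ⟨isPositivePath_iff.2 ⟨f, h0, hn, hf.mono h.step, rfl⟩,
    walkGraph_V_subset h.fst_mem hf (h.terminals_subset hn), walkGraph_E_subset hf⟩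

theorem IsGridFace.isLadderFace (h : IsGridFace (nseq k s) (terminals s k) γ) :
    IsLadderFace s k γ := by
  have hT (v) (hv : v ∈ terminals s k) : v.1 + v.2 = nseq k s := (mem_terminals_iff.1 hv).1
  refine ⟨h.terminals_subset, {p | IsPositivePath s k p ∧ p ≤ γ}, fun p hp => hp.1,
    (Set.iUnion₂_subset fun p hp => hp.2.1).antisymm' fun v hv => ?_,
    (Set.iUnion₂_subset fun p hp => hp.2.2).antisymm' ?_⟩
  · obtain ⟨f, hf0, hfn, hf, i, hi, rfl⟩ := h.exists_walk_through_vertex hT hv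
    exact Set.mem_biUnion (h.isPositivePath_walkGraph hf0 hfn hf) ⟨i, hi, rfl⟩
  · rintro ⟨u, v⟩ huv
    obtain ⟨f, hf0, hfn, hf, i, hi, rfl, rfl⟩ := h.exists_walk_through_edge hT huv
    exact Set.mem_biUnion (h.isPositivePath_walkGraph hf0 hfn hf) ⟨i, hi, rfl⟩

theorem isLadderFace_iff_isGridFace :
    IsLadderFace s k γ ↔ IsGridFace (nseq k s) (terminals s k) γ :=
  ⟨IsLadderFace.isGridFace, IsGridFace.isLadderFace⟩

end LocalDescription

section Finiteness

variable {n : ℕ} {T : Set (ℕ × ℕ)} {γ : LGraph}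

theorem IsGridFace.V_subset (h : IsGridFace n T γ) : γ.V ⊆ Set.Iic (n, n) := fun v hv =>
  have hle := h.level_le v hv
  Prod.mk_le_mk.2 ⟨(Nat.le_add_right _ _).trans hle, (Nat.le_add_left _ _).trans hle⟩

theorem IsGridFace.E_subset (h : IsGridFace n T γ) : γ.E ⊆ Set.Iic (n, n) ×ˢ Set.Iic (n, n) :=
  fun e he => ⟨h.V_subset (h.fst_mem e he), h.V_subset (h.snd_mem e he)⟩

theorem IsGridFace.finite_V (h : IsGridFace n T γ) : γ.V.Finite :=
  (Set.finite_Iic _).subset h.V_subset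

theorem IsGridFace.finite_E (h : IsGridFace n T γ) : γ.E.Finite :=
  ((Set.finite_Iic _).prod (Set.finite_Iic _)).subset h.E_subset

theorem finite_setOf_isLadderFace (s : ℕ) (k : ℕ → ℕ) : {γ | IsLadderFace s k γ}.Finite := by
  let B : Set (ℕ × ℕ) := Set.Iic (nseq k s, nseq k s)
  have hB : B.Finite := Set.finite_Iic _
  refine ((hB.powerset.prod (hB.prod hB).powerset).preimage
    (f := fun γ : LGraph => (γ.V, γ.E)) ?_).subset fun γ hγ => ?_
  · exact fun γ _ δ _ h => LGraph.ext (congrArg Prod.fst h) (congrArg Prod.snd h)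
  · exact ⟨hγ.isGridFace.V_subset, hγ.isGridFace.E_subset⟩

theorem IsGridFace.ldim_nonneg (h : IsGridFace n T γ) : 0 ≤ ldim γ := by
  have hV : γ.V ⊆ insert (0, 0) (Prod.snd '' γ.E) := fun v hv =>
    (h.exists_in v hv).imp_right fun ⟨u, hu⟩ => ⟨(u, v), hu, rfl⟩
  have hcard : γ.V.ncard ≤ γ.E.ncard + 1 := calc
    γ.V.ncard ≤ (insert (0, 0) (Prod.snd '' γ.E)).ncard :=
      Set.ncard_le_ncard hV ((h.finite_E.image _).insert _)
    _ ≤ (Prod.snd '' γ.E).ncard + 1 := Set.ncard_insert_le _ _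
    _ ≤ γ.E.ncard + 1 := Nat.add_le_add_right (Set.ncard_image_le h.finite_E) 1
  unfold ldim
  omega

end Finiteness

section Layers

variable {n : ℕ} {G : Set ((ℕ × ℕ) × (ℕ × ℕ))} {T : Set (ℕ × ℕ)} {γ σ : LGraph}

/-- The graph formed by the edges in `G` and their endpoints; for instance
`g_w = edgeGraph (gwE s k α β)`. -/
def edgeGraph (G : Set ((ℕ × ℕ) × (ℕ × ℕ))) : LGraph := ⟨{v | ∃ e ∈ G, v = e.1 ∨ v = e.2}, G⟩

/-- All edges in `G` are grid steps from the antidiagonal `x + y = n` to the next one. -/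
def IsLayer (n : ℕ) (G : Set ((ℕ × ℕ) × (ℕ × ℕ))) : Prop :=
  ∀ e ∈ G, gridStep e.1 e.2 ∧ e.1.1 + e.1.2 = n

/-- The part of `γ` in the region `x + y ≤ n`. -/
def lowerPart (n : ℕ) (γ : LGraph) : LGraph :=
  ⟨{v ∈ γ.V | v.1 + v.2 ≤ n}, {e ∈ γ.E | e.2.1 + e.2.2 ≤ n}⟩

/-- The edges of `γ` which start on the antidiagonal `x + y = n`. -/
def edgesFrom (n : ℕ) (γ : LGraph) : Set ((ℕ × ℕ) × (ℕ × ℕ)) := {e ∈ γ.E | e.1.1 + e.1.2 = n}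

theorem IsLayer.snd_level_eq (hG : IsLayer n G) {e : (ℕ × ℕ) × (ℕ × ℕ)} (he : e ∈ G) :
    e.2.1 + e.2.2 = n + 1 := by
  rw [(hG e he).1.level_eq, (hG e he).2]

theorem ugraph_edgeGraph_V (h : Prod.fst '' G ⊆ σ.V) :
    (ugraph σ (edgeGraph G)).V = σ.V ∪ Prod.snd '' G := by
  refine (Set.union_subset Set.subset_union_left ?_).antisymm
    (Set.union_subset_union_right _ ?_)
  · rintro _ ⟨e, he, rfl | rfl⟩
    · exact Or.inl (h ⟨e, he, rfl⟩)
    · exact Or.inr ⟨e, he, rfl⟩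
  · rintro _ ⟨e, he, rfl⟩
    exact ⟨e, he, Or.inr rfl⟩

theorem IsGridFace.ugraph_edgeGraph (hG : IsLayer n G) (h : IsGridFace n (Prod.fst '' G) σ) :
    IsGridFace (n + 1) (Prod.snd '' G) (ugraph σ (edgeGraph G)) := by
  have hV := ugraph_edgeGraph_V h.terminals_subset
  refine ⟨?_, ?_, ?_, ?_, ?_, ?_, ?_⟩
  · exact hV ▸ Set.subset_union_right
  · exact fun e he => he.elim (h.step e) fun heG => (hG e heG).1
  · exact fun e he =>
      hV ▸ Or.inl (he.elim (h.fst_mem e) fun heG => h.terminals_subset ⟨e, heG, rfl⟩)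
  · exact fun e he => hV ▸ he.imp (h.snd_mem e) fun heG => ⟨e, heG, rfl⟩
  · rw [hV]
    rintro v (hv | ⟨e, he, rfl⟩)
    · exact (h.level_le v hv).trans n.le_succ
    · exact (hG.snd_level_eq he).le
  · rw [hV]
    rintro v (hv | ⟨e, he, rfl⟩)
    · exact (h.exists_in v hv).imp_right fun ⟨u, hu⟩ => ⟨u, Or.inl hu⟩
    · exact Or.inr ⟨e.1, Or.inr he⟩
  · rw [hV]
    rintro v (hv | hv)
    · rcases h.exists_out v hv with ⟨e, he, rfl⟩ | ⟨w, hw⟩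
      · exact Or.inr ⟨e.2, Or.inr he⟩
      · exact Or.inr ⟨w, Or.inl hw⟩
    · exact Or.inl hv

theorem lowerPart_ugraph_edgeGraph (hG : IsLayer n G) (h : IsGridFace n (Prod.fst '' G) σ) :
    lowerPart n (ugraph σ (edgeGraph G)) = σ := by
  refine LGraph.ext ?_ ?_
  · change {v ∈ (ugraph σ (edgeGraph G)).V | _} = _
    rw [ugraph_edgeGraph_V h.terminals_subset]
    refine Set.Subset.antisymm ?_ fun v hv => ⟨Or.inl hv, h.level_le v hv⟩
    rintro v ⟨hv | ⟨e, he, rfl⟩, hvn⟩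
    · exact hv
    · exact absurd ((hG.snd_level_eq he).symm.trans_le hvn) n.not_succ_le_self
  · refine Set.Subset.antisymm ?_ fun e he => ⟨Or.inl he, h.level_le _ (h.snd_mem e he)⟩
    rintro e ⟨he | he, hen⟩
    · exact he
    · exact absurd ((hG.snd_level_eq he).symm.trans_le hen) n.not_succ_le_self

theorem edgesFrom_ugraph_edgeGraph (hG : IsLayer n G) (h : IsGridFace n T σ) :
    edgesFrom n (ugraph σ (edgeGraph G)) = G := by
  refine Set.Subset.antisymm ?_ fun e he => ⟨Or.inr he, (hG e he).2⟩
  rintro e ⟨he | he, hen⟩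
  · exact absurd hen (h.fst_level_lt he).ne
  · exact he

theorem IsGridFace.isLayer_edgesFrom (h : IsGridFace (n + 1) T γ) : IsLayer n (edgesFrom n γ) :=
  fun e he => ⟨h.step e he.1, he.2⟩

theorem IsGridFace.snd_image_edgesFrom (hT : ∀ v ∈ T, v.1 + v.2 = n + 1)
    (h : IsGridFace (n + 1) T γ) : Prod.snd '' edgesFrom n γ = T := by
  refine Set.Subset.antisymm ?_ fun t ht => ?_
  · rintro _ ⟨e, he, rfl⟩
    refine (h.exists_out _ (h.snd_mem e he.1)).resolve_right fun ⟨w, hw⟩ => ?_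
    exact (h.fst_level_lt hw).ne (h.isLayer_edgesFrom.snd_level_eq he)
  · rcases h.exists_in t (h.terminals_subset ht) with rfl | ⟨u, hu⟩
    · exact absurd (hT _ ht) n.succ_ne_zero.symm
    · exact ⟨(u, t), ⟨hu, Nat.succ_injective ((h.step _ hu).level_eq.symm.trans (hT t ht))⟩, rfl⟩

theorem IsGridFace.isGridFace_lowerPart (hT : ∀ v ∈ T, v.1 + v.2 = n + 1)
    (h : IsGridFace (n + 1) T γ) :
    IsGridFace n (Prod.fst '' edgesFrom n γ) (lowerPart n γ) where
  terminals_subset := by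
    rintro _ ⟨e, he, rfl⟩
    exact ⟨h.fst_mem e he.1, he.2.le⟩
  step e he := h.step e he.1
  fst_mem e he := ⟨h.fst_mem e he.1,
    Nat.le_of_succ_le ((h.step e he.1).level_eq.symm.trans_le he.2)⟩
  snd_mem e he := ⟨h.snd_mem e he.1, he.2⟩
  level_le v hv := hv.2
  exists_in v hv := (h.exists_in v hv.1).imp_right fun ⟨u, hu⟩ => ⟨u, hu, hv.2⟩
  exists_out v hv := by
    rcases h.exists_out v hv.1 with hvT | ⟨w, hw⟩
    · exact absurd ((hT v hvT).symm.trans_le hv.2) n.not_succ_le_self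
    · rcases hv.2.eq_or_lt with heq | hlt
      · exact Or.inl ⟨(v, w), ⟨hw, heq⟩, rfl⟩
      · exact Or.inr ⟨w, hw, (h.step _ hw).level_eq.trans_le hlt⟩

theorem IsGridFace.ugraph_lowerPart (hT : ∀ v ∈ T, v.1 + v.2 = n + 1)
    (h : IsGridFace (n + 1) T γ) :
    ugraph (lowerPart n γ) (edgeGraph (edgesFrom n γ)) = γ := by
  refine LGraph.ext ?_ ?_
  · rw [ugraph_edgeGraph_V (h.isGridFace_lowerPart hT).terminals_subset, h.snd_image_edgesFrom hT]
    refine (Set.union_subset (fun v hv => hv.1) h.terminals_subset).antisymm fun v hv => ?_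
    rcases (h.level_le v hv).lt_or_eq with hlt | heq
    · exact Or.inl ⟨hv, Nat.le_of_lt_succ hlt⟩
    · refine Or.inr ((h.exists_out v hv).resolve_right fun ⟨w, hw⟩ => ?_)
      exact (h.fst_level_lt hw).ne heq
  · refine (Set.union_subset (fun e he => he.1) fun e he => he.1).antisymm fun e he => ?_
    rcases (Nat.le_of_lt_succ (h.fst_level_lt he)).lt_or_eq with hlt | heq
    · exact Or.inl ⟨he, (h.step e he).level_eq.trans_le hlt⟩
    · exact Or.inr ⟨he, heq⟩

theorem IsGridFace.ldim_ugraph_edgeGraph (hG : IsLayer n G) (h : IsGridFace n (Prod.fst '' G) σ) :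
    ldim (ugraph σ (edgeGraph G)) = ldim σ + G.ncard - (Prod.snd '' G).ncard := by
  have hGfin : G.Finite := (h.ugraph_edgeGraph hG).finite_E.subset Set.subset_union_right
  have hVdisj : Disjoint σ.V (Prod.snd '' G) := Set.disjoint_right.2 <| by
    rintro _ ⟨e, he, rfl⟩ hv
    exact absurd ((hG.snd_level_eq he).symm.trans_le (h.level_le _ hv)) n.not_succ_le_self
  have hEdisj : Disjoint σ.E G :=
    Set.disjoint_right.2 fun e he heσ => (h.fst_level_lt heσ).ne (hG e he).2
  have hV : (ugraph σ (edgeGraph G)).V.ncard = σ.V.ncard + (Prod.snd '' G).ncard := by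
    rw [ugraph_edgeGraph_V h.terminals_subset,
      Set.ncard_union_eq hVdisj h.finite_V (hGfin.image _)]
  have hE : (ugraph σ (edgeGraph G)).E.ncard = σ.E.ncard + G.ncard :=
    Set.ncard_union_eq hEdisj h.finite_E hGfin
  simp only [ldim, hV, hE]
  push_cast
  ring

end Layers

section Words

variable {s : ℕ} {α β : ℕ → ℕ}

theorem IsW.alpha_zero (hw : IsW s α β) : α 0 = 0 := hw.2.1

theorem IsW.beta_zero (hw : IsW s α β) : β 0 = 1 := hw.2.2.1

theorem IsW.alpha_last (hw : IsW s α β) : α s = 1 := hw.2.2.2.1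

theorem IsW.beta_last (hw : IsW s α β) : β s = 0 := hw.2.2.2.2

theorem IsW.pos (hw : IsW s α β) : 1 ≤ s :=
  Nat.pos_of_ne_zero fun h => zero_ne_one (hw.alpha_zero.symm.trans (h ▸ hw.alpha_last))

theorem IsW.pos_of_alpha_eq_one (hw : IsW s α β) {i : ℕ} (hα : α i = 1) : 0 < i :=
  Nat.pos_of_ne_zero fun h => zero_ne_one (hw.alpha_zero.symm.trans (h ▸ hα))

theorem IsW.lt_of_beta_eq_one (hw : IsW s α β) {i : ℕ} (hi : i ≤ s) (hβ : β i = 1) : i < s :=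
  hi.lt_of_ne fun h => zero_ne_one (hw.beta_last.symm.trans (h ▸ hβ))

theorem IsW.cases (hw : IsW s α β) {i : ℕ} (hi : i ≤ s) :
    (α i = 1 ∧ β i = 0) ∨ (α i = 0 ∧ β i = 1) ∨ (α i = 1 ∧ β i = 1) := by
  rcases i.eq_zero_or_pos with rfl | hi0
  · exact Or.inr (Or.inl ⟨hw.alpha_zero, hw.beta_zero⟩)
  · rcases hi.eq_or_lt with rfl | hlt
    · exact Or.inl ⟨hw.alpha_last, hw.beta_last⟩
    · simpa only [Prod.mk.injEq] using hw.1 i hi0 hlt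

theorem IsW.add_eq (hw : IsW s α β) {i : ℕ} (hi : i ≤ s) : α i + β i = 1 + α i * β i := by
  rcases hw.cases hi with ⟨h, h'⟩ | ⟨h, h'⟩ | ⟨h, h'⟩ <;> rw [h, h']

theorem IsW.le_one (hw : IsW s α β) {i : ℕ} (hi : i ≤ s) : α i ≤ 1 ∧ β i ≤ 1 := by
  rcases hw.cases hi with ⟨h, h'⟩ | ⟨h, h'⟩ | ⟨h, h'⟩ <;> simp [h, h']

variable (c : Fin (s - 1) → Fin 3)

theorem alph_succ (j : Fin (s - 1)) : alph s c (j + 1) = aW3 (c j) := by simp [alph]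

theorem bet_succ (j : Fin (s - 1)) : bet s c (j + 1) = bW3 (c j) := by simp [bet]

theorem alph_last (hs : 1 ≤ s) : alph s c s = 1 := by simp [alph, Nat.one_le_iff_ne_zero.1 hs]

theorem bet_last (hs : 1 ≤ s) : bet s c s = 0 := by simp [bet, Nat.one_le_iff_ne_zero.1 hs]

theorem eq_zero_or_eq_fin_succ_or_eq_last {i : ℕ} (hi : i ≤ s) :
    i = 0 ∨ (∃ j : Fin (s - 1), i = j + 1) ∨ i = s := by
  rcases i with _ | i
  · exact Or.inl rfl
  · rcases hi.lt_or_eq with hlt | heq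
    · exact Or.inr (Or.inl ⟨⟨i, Nat.lt_sub_of_add_lt hlt⟩, rfl⟩)
    · exact Or.inr (Or.inr heq)

theorem isW_alph_bet (hs : 1 ≤ s) : IsW s (alph s c) (bet s c) := by
  refine ⟨fun i hi0 his => ?_, rfl, rfl, alph_last c hs, bet_last c hs⟩
  rcases eq_zero_or_eq_fin_succ_or_eq_last his.le with rfl | ⟨j, rfl⟩ | rfl
  · omega
  · rw [alph_succ, bet_succ]
    generalize c j = x
    revert x
    decide
  · exact absurd his (lt_irrefl _)

theorem existsUnique_code {A B : ℕ → Prop} (hA0 : ¬A 0) (hB0 : B 0) (hAs : A s) (hBs : ¬B s)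
    (hAB : ∀ i ≤ s, A i ∨ B i) :
    ∃! c : Fin (s - 1) → Fin 3, ∀ i ≤ s, (alph s c i = 1 ↔ A i) ∧ (bet s c i = 1 ↔ B i) := by
  have hs : 1 ≤ s := Nat.pos_of_ne_zero fun h => hA0 (h ▸ hAs)
  refine ⟨fun j => if ¬B (j + 1) then 0 else if ¬A (j + 1) then 1 else 2, fun i hi => ?_,
    fun c hc => funext fun j => ?_⟩
  · rcases eq_zero_or_eq_fin_succ_or_eq_last hi with rfl | ⟨j, rfl⟩ | rfl
    · simp [alph, bet, hA0, hB0]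
    · rw [alph_succ, bet_succ]
      have hABj := hAB _ hi
      by_cases hB : B (j + 1) <;> by_cases hA : A (j + 1) <;> simp_all [aW3, bW3]
    · simp [alph_last _ hs, bet_last _ hs, hAs, hBs]
  · obtain ⟨hα, hβ⟩ := hc (j + 1) (by omega)
    rw [alph_succ] at hα
    rw [bet_succ] at hβ
    rw [← hα, ← hβ]
    generalize c j = x
    fin_cases x <;> simp [aW3, bW3]

end Words

section TerminalEdges

variable {s i j n : ℕ} {k α β : ℕ → ℕ} {G : Set ((ℕ × ℕ) × (ℕ × ℕ))}

/-- The horizontal edge into the terminal vertex `v_i`. For `i = 0` there is none, and truncated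
subtraction makes this a loop. -/
def horizEdge (s : ℕ) (k : ℕ → ℕ) (i : ℕ) : (ℕ × ℕ) × (ℕ × ℕ) :=
  ((nseq k i - 1, nseq k s - nseq k i), terminal s k i)

/-- The vertical edge into the terminal vertex `v_i`. For `i = s` there is none, and truncated
subtraction makes this a loop. -/
def vertEdge (s : ℕ) (k : ℕ → ℕ) (i : ℕ) : (ℕ × ℕ) × (ℕ × ℕ) :=
  ((nseq k i, nseq k s - nseq k i - 1), terminal s k i)

theorem gridStep_terminal_iff {u : ℕ × ℕ} : gridStep u (terminal s k i) ↔
    (0 < nseq k i ∧ (u, terminal s k i) = horizEdge s k i) ∨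
      (nseq k i < nseq k s ∧ (u, terminal s k i) = vertEdge s k i) := by
  simp only [gridStep, horizEdge, vertEdge, terminal, Prod.ext_iff, and_true]
  omega

theorem gridStep_horizEdge_iff :
    gridStep (horizEdge s k i).1 (horizEdge s k i).2 ↔ 0 < nseq k i := by
  simp only [gridStep, horizEdge, terminal, Prod.mk.injEq, and_true]
  omega

theorem gridStep_vertEdge_iff :
    gridStep (vertEdge s k i).1 (vertEdge s k i).2 ↔ nseq k i < nseq k s := by
  simp only [gridStep, vertEdge, terminal, Prod.mk.injEq, true_and]
  omega

theorem horizEdge_injOn (hk : ∀ i < s, 0 < k i) : Set.InjOn (horizEdge s k) (Set.Iic s) :=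
  fun _ hi _ hj h => terminal_injOn hk hi hj (congrArg Prod.snd h)

theorem vertEdge_injOn (hk : ∀ i < s, 0 < k i) : Set.InjOn (vertEdge s k) (Set.Iic s) :=
  fun _ hi _ hj h => terminal_injOn hk hi hj (congrArg Prod.snd h)

theorem horizEdge_ne_vertEdge (h0 : 0 < nseq k s) : horizEdge s k i ≠ vertEdge s k j := by
  simp only [horizEdge, vertEdge, terminal, Ne, Prod.ext_iff]
  omega

theorem mem_gwE_iff {e : (ℕ × ℕ) × (ℕ × ℕ)} : e ∈ gwE s k α β ↔
    ∃ i ≤ s, (α i = 1 ∧ e = horizEdge s k i) ∨ (β i = 1 ∧ e = vertEdge s k i) := Iff.rfl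

theorem horizEdge_mem_gwE (hs : 1 ≤ s) (hk : ∀ i < s, 0 < k i) (hi : i ≤ s) :
    horizEdge s k i ∈ gwE s k α β ↔ α i = 1 := by
  refine ⟨?_, fun h => ⟨i, hi, Or.inl ⟨h, rfl⟩⟩⟩
  rintro ⟨j, hj, ⟨hα, h⟩ | ⟨-, h⟩⟩
  · rwa [horizEdge_injOn hk hi hj h]
  · exact absurd h (horizEdge_ne_vertEdge (nseq_pos hk hs le_rfl))

theorem vertEdge_mem_gwE (hs : 1 ≤ s) (hk : ∀ i < s, 0 < k i) (hi : i ≤ s) :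
    vertEdge s k i ∈ gwE s k α β ↔ β i = 1 := by
  refine ⟨?_, fun h => ⟨i, hi, Or.inr ⟨h, rfl⟩⟩⟩
  rintro ⟨j, hj, ⟨-, h⟩ | ⟨hβ, h⟩⟩
  · exact absurd h.symm (horizEdge_ne_vertEdge (nseq_pos hk hs le_rfl))
  · rwa [vertEdge_injOn hk hi hj h]

theorem gwE_eq_iff (hs : 1 ≤ s) (hk : ∀ i < s, 0 < k i)
    (hG : ∀ e ∈ G, ∃ i ≤ s, e = horizEdge s k i ∨ e = vertEdge s k i) :
    gwE s k α β = G ↔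
      ∀ i ≤ s, (α i = 1 ↔ horizEdge s k i ∈ G) ∧ (β i = 1 ↔ vertEdge s k i ∈ G) := by
  constructor
  · rintro rfl i hi
    exact ⟨(horizEdge_mem_gwE hs hk hi).symm, (vertEdge_mem_gwE hs hk hi).symm⟩
  · refine fun h => Set.Subset.antisymm ?_ fun e he => ?_
    · rintro e ⟨i, hi, ⟨hα, rfl⟩ | ⟨hβ, rfl⟩⟩
      · exact (h i hi).1.1 hα
      · exact (h i hi).2.1 hβ
    · obtain ⟨i, hi, rfl | rfl⟩ := hG e he
      · exact ⟨i, hi, Or.inl ⟨(h i hi).1.2 he, rfl⟩⟩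
      · exact ⟨i, hi, Or.inr ⟨(h i hi).2.2 he, rfl⟩⟩

theorem IsLayer.existsUnique_gwE_eq (hs : 1 ≤ s) (hk : ∀ i < s, 0 < k i) (hG : IsLayer n G)
    (hsnd : Prod.snd '' G = terminals s k) :
    ∃! c : Fin (s - 1) → Fin 3, gwE s k (alph s c) (bet s c) = G := by
  have hstep {u} {i} (hu : (u, terminal s k i) ∈ G) :
      (u, terminal s k i) = horizEdge s k i ∨ (u, terminal s k i) = vertEdge s k i :=
    (gridStep_terminal_iff.1 (hG _ hu).1).imp And.right And.right
  have hsub : ∀ e ∈ G, ∃ i ≤ s, e = horizEdge s k i ∨ e = vertEdge s k i := by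
    rintro ⟨u, v⟩ he
    obtain ⟨i, hi, rfl⟩ : v ∈ terminals s k := hsnd ▸ ⟨_, he, rfl⟩
    exact ⟨i, hi, hstep he⟩
  have hAB (i) (hi : i ≤ s) : horizEdge s k i ∈ G ∨ vertEdge s k i ∈ G := by
    obtain ⟨⟨u, _⟩, he, rfl⟩ : terminal s k i ∈ Prod.snd '' G := hsnd ▸ terminal_mem hi
    rcases hstep he with h | h
    · exact Or.inl (h ▸ he)
    · exact Or.inr (h ▸ he)
  have hA0 : horizEdge s k 0 ∉ G := fun h =>
    absurd (gridStep_horizEdge_iff.1 (hG _ h).1) (lt_irrefl 0)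
  have hBs : vertEdge s k s ∉ G := fun h =>
    absurd (gridStep_vertEdge_iff.1 (hG _ h).1) (lt_irrefl _)
  simp only [gwE_eq_iff hs hk hsub]
  exact existsUnique_code hA0 ((hAB 0 s.zero_le).resolve_left hA0)
    ((hAB s le_rfl).resolve_right hBs) hBs hAB

theorem IsW.isLayer_gwE (hk : ∀ i < s, 0 < k i) (hw : IsW s α β) (hn : n + 1 = nseq k s) :
    IsLayer n (gwE s k α β) := by
  have hstep : ∀ e ∈ gwE s k α β, gridStep e.1 e.2 := by
    rintro e ⟨i, hi, ⟨hα, rfl⟩ | ⟨hβ, rfl⟩⟩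
    · exact gridStep_horizEdge_iff.2 (nseq_pos hk (hw.pos_of_alpha_eq_one hα) hi)
    · exact gridStep_vertEdge_iff.2 (nseq_lt_last hk (hw.lt_of_beta_eq_one hi hβ))
  refine fun e he => ⟨hstep e he, Nat.succ_injective ?_⟩
  obtain ⟨i, hi, h⟩ := mem_gwE_iff.1 he
  have hsnd : e.2 = terminal s k i := by rcases h with ⟨-, rfl⟩ | ⟨-, rfl⟩ <;> rfl
  calc e.1.1 + e.1.2 + 1 = e.2.1 + e.2.2 := (hstep e he).level_eq.symm
    _ = nseq k s := by rw [hsnd]; exact (mem_terminals_iff.1 (terminal_mem hi)).1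
    _ = n + 1 := hn.symm

theorem IsW.snd_image_gwE (hw : IsW s α β) : Prod.snd '' gwE s k α β = terminals s k := by
  refine Set.Subset.antisymm ?_ ?_
  · rintro _ ⟨e, ⟨i, hi, ⟨-, rfl⟩ | ⟨-, rfl⟩⟩, rfl⟩ <;> exact terminal_mem hi
  · rintro _ ⟨i, hi, rfl⟩
    rcases hw.cases hi with ⟨h, -⟩ | ⟨-, h⟩ | ⟨h, -⟩
    · exact ⟨horizEdge s k i, ⟨i, hi, Or.inl ⟨h, rfl⟩⟩, rfl⟩
    · exact ⟨vertEdge s k i, ⟨i, hi, Or.inr ⟨h, rfl⟩⟩, rfl⟩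
    · exact ⟨horizEdge s k i, ⟨i, hi, Or.inl ⟨h, rfl⟩⟩, rfl⟩

end TerminalEdges

section ReducedSequence

variable {s : ℕ} {k α β : ℕ → ℕ}

theorem rstar_even (j : ℕ) : rstar s k α β (2 * j) = k j + 1 - α (j + 1) - β j := by
  simp [rstar]

theorem rstar_odd (j : ℕ) : rstar s k α β (2 * j + 1) = α (j + 1) * β (j + 1) := by
  simp [rstar, Nat.mul_add_div]

theorem IsW.rstar_even_add (hk : ∀ i < s, 0 < k i) (hw : IsW s α β) {j : ℕ} (hj : j < s) :
    rstar s k α β (2 * j) + α (j + 1) + β j = k j + 1 := by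
  have hkj := hk j hj
  have hα : α (j + 1) ≤ 1 := (hw.le_one hj).1
  have hβ : β j ≤ 1 := (hw.le_one hj.le).2
  rw [rstar_even]
  omega

theorem IsW.nseq_rstar_even (hk : ∀ i < s, 0 < k i) (hw : IsW s α β) {j : ℕ} (hj : j < s) :
    nseq (rstar s k α β) (2 * j) + 1 = nseq k j + β j := by
  induction j with
  | zero => simp [nseq, hw.beta_zero]
  | succ j ih =>
    have hj' : j < s := Nat.lt_of_succ_lt hj
    have hodd := rstar_odd (s := s) (k := k) (α := α) (β := β) j
    have hadd := hw.add_eq hj.le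
    have heven := hw.rstar_even_add hk hj'
    have hprev := ih hj'
    rw [Nat.mul_succ, nseq_succ, nseq_succ, nseq_succ]
    omega

theorem IsW.nseq_rstar_odd (hk : ∀ i < s, 0 < k i) (hw : IsW s α β) {j : ℕ} (hj : j < s) :
    nseq (rstar s k α β) (2 * j + 1) + α (j + 1) = nseq k (j + 1) := by
  have heven := hw.rstar_even_add hk hj
  have hprev := hw.nseq_rstar_even hk hj
  rw [nseq_succ, nseq_succ]
  omega

theorem IsW.nseq_rstar_last (hk : ∀ i < s, 0 < k i) (hw : IsW s α β) :
    nseq (rstar s k α β) (2 * s - 1) + 1 = nseq k s := by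
  obtain ⟨r, rfl⟩ := Nat.exists_eq_add_of_le' hw.pos
  have hlast := hw.nseq_rstar_odd hk r.lt_succ_self
  rwa [hw.alpha_last] at hlast

theorem IsW.exists_eq_nseq_rstar_iff (hk : ∀ i < s, 0 < k i) (hw : IsW s α β) {x : ℕ} :
    (∃ t ≤ 2 * s - 1, x = nseq (rstar s k α β) t) ↔
      ∃ i ≤ s, (α i = 1 ∧ x + 1 = nseq k i) ∨ (β i = 1 ∧ x = nseq k i) := by
  have hs := hw.pos
  constructor
  · rintro ⟨t, ht, rfl⟩
    obtain ⟨j, rfl | rfl⟩ := t.even_or_odd'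
    · have hj : j < s := by omega
      have heven := hw.nseq_rstar_even hk hj
      exact ⟨j, hj.le, by rcases hw.cases hj.le with h | h | h <;> omega⟩
    · have hj : j < s := by omega
      have hodd := hw.nseq_rstar_odd hk hj
      exact ⟨j + 1, hj, by rcases hw.cases (i := j + 1) hj with h | h | h <;> omega⟩
  · rintro ⟨_ | j, hi, ⟨hα, hx⟩ | ⟨hβ, hx⟩⟩
    · exact absurd (hw.pos_of_alpha_eq_one hα) (lt_irrefl 0)
    · exact ⟨0, Nat.zero_le _, hx⟩
    · have hodd := hw.nseq_rstar_odd hk (Nat.lt_of_succ_le hi)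
      exact ⟨2 * j + 1, by omega, by omega⟩
    · have hlt : j + 1 < s := hw.lt_of_beta_eq_one hi hβ
      have heven := hw.nseq_rstar_even hk hlt
      exact ⟨2 * (j + 1), by omega, by omega⟩

theorem IsW.fst_image_gwE (hk : ∀ i < s, 0 < k i) (hw : IsW s α β) :
    Prod.fst '' gwE s k α β = terminals (2 * s - 1) (rstar s k α β) := by
  have hlast := hw.nseq_rstar_last hk
  have hlayer := hw.isLayer_gwE hk hlast
  ext v
  rw [mem_terminals_iff, hw.exists_eq_nseq_rstar_iff hk]
  constructor
  · rintro ⟨e, he, rfl⟩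
    refine ⟨(hlayer e he).2, ?_⟩
    obtain ⟨i, hi, ⟨hα, rfl⟩ | ⟨hβ, rfl⟩⟩ := mem_gwE_iff.1 he
    · exact ⟨i, hi, Or.inl ⟨hα, Nat.sub_add_cancel (gridStep_horizEdge_iff.1 (hlayer _ he).1)⟩⟩
    · exact ⟨i, hi, Or.inr ⟨hβ, rfl⟩⟩
  · rintro ⟨hv, i, hi, ⟨hα, hvi⟩ | ⟨hβ, hvi⟩⟩
    · refine ⟨horizEdge s k i, ⟨i, hi, Or.inl ⟨hα, rfl⟩⟩, ?_⟩
      exact Prod.ext (by simp only [horizEdge]; omega) (by simp only [horizEdge]; omega)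
    · refine ⟨vertEdge s k i, ⟨i, hi, Or.inr ⟨hβ, rfl⟩⟩, ?_⟩
      exact Prod.ext (by simp only [vertEdge]; omega) (by simp only [vertEdge]; omega)

theorem gwE_eq_image_union : gwE s k α β =
    horizEdge s k '' {i | i ≤ s ∧ α i = 1} ∪ vertEdge s k '' {i | i ≤ s ∧ β i = 1} := by
  ext e
  simp only [mem_gwE_iff, Set.mem_union, Set.mem_image, Set.mem_ofPred_eq]
  grind

theorem IsW.sum_range_mul_eq (hw : IsW s α β) :
    ∑ i ∈ Finset.range (s + 1), α i * β i = ∑ j ∈ Finset.range (s - 1), α (j + 1) * β (j + 1) := by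
  obtain ⟨r, rfl⟩ := Nat.exists_eq_add_of_le' hw.pos
  rw [Finset.sum_range_succ, Finset.sum_range_succ', hw.alpha_zero, hw.beta_last,
    Nat.add_sub_cancel, zero_mul, mul_zero, add_zero, add_zero]

theorem IsW.ncard_gwE (hk : ∀ i < s, 0 < k i) (hw : IsW s α β) :
    (gwE s k α β).ncard = s + 1 + ∑ j ∈ Finset.range (s - 1), α (j + 1) * β (j + 1) := by
  have hdisj : Disjoint (horizEdge s k '' {i | i ≤ s ∧ α i = 1})
      (vertEdge s k '' {i | i ≤ s ∧ β i = 1}) := by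
    rw [Set.disjoint_left]
    rintro _ ⟨i, -, rfl⟩ ⟨j, -, h⟩
    exact horizEdge_ne_vertEdge (nseq_pos hk hw.pos le_rfl) h.symm
  have hsub (f : ℕ → ℕ) : {i | i ≤ s ∧ f i = 1} ⊆ Set.Iic s := fun _ => And.left
  have hfin (f : ℕ → ℕ) : {i | i ≤ s ∧ f i = 1}.Finite := (Set.finite_Iic s).subset (hsub f)
  calc (gwE s k α β).ncard
      = {i | i ≤ s ∧ α i = 1}.ncard + {i | i ≤ s ∧ β i = 1}.ncard := by
        rw [gwE_eq_image_union, Set.ncard_union_eq hdisj ((hfin α).image _) ((hfin β).image _),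
          ((horizEdge_injOn hk).mono (hsub α)).ncard_image,
          ((vertEdge_injOn hk).mono (hsub β)).ncard_image]
    _ = ∑ i ∈ Finset.range (s + 1), (α i + β i) := by
        rw [ncard_setOf_le_and_eq_one fun i hi => (hw.le_one hi).1,
          ncard_setOf_le_and_eq_one fun i hi => (hw.le_one hi).2, Finset.sum_add_distrib]
    _ = ∑ i ∈ Finset.range (s + 1), (1 + α i * β i) :=
        Finset.sum_congr rfl fun i hi => hw.add_eq (Finset.mem_range_succ_iff.1 hi)
    _ = s + 1 + ∑ j ∈ Finset.range (s - 1), α (j + 1) * β (j + 1) := by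
        rw [Finset.sum_add_distrib, hw.sum_range_mul_eq, Finset.sum_const, Finset.card_range,
          smul_eq_mul, mul_one]

end ReducedSequence

section Decomposition

variable {s : ℕ} {k : ℕ → ℕ}

/-- Gluing `g_w` onto a face `σ` of `Γ_{r_w(k) * w̃}`, for a pair `(w, σ)`. -/
def glue (s : ℕ) (k : ℕ → ℕ) (p : (Fin (s - 1) → Fin 3) × LGraph) : LGraph :=
  ugraph p.2 (gwGraph3 s k p.1)

theorem isLadderFace_newk_iff (hs : 1 ≤ s) (hk : ∀ i < s, 0 < k i) {n : ℕ}
    (hn : n + 1 = nseq k s) {c : Fin (s - 1) → Fin 3} {σ : LGraph} :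
    IsLadderFace (2 * s - 1) (newk s c k) σ ↔
      IsGridFace n (Prod.fst '' gwE s k (alph s c) (bet s c)) σ := by
  have hw := isW_alph_bet c hs
  change IsLadderFace _ (rstar s k (alph s c) (bet s c)) _ ↔ _
  rw [isLadderFace_iff_isGridFace, hw.fst_image_gwE hk]
  obtain rfl : nseq (rstar s k (alph s c) (bet s c)) (2 * s - 1) = n :=
    Nat.succ_injective ((hw.nseq_rstar_last hk).trans hn.symm)
  rfl

theorem bijOn_glue (hs : 1 ≤ s) (hk : ∀ i < s, 0 < k i) :
    Set.BijOn (glue s k) {p | IsLadderFace (2 * s - 1) (newk s p.1 k) p.2}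
      {γ | IsLadderFace s k γ} := by
  obtain ⟨n, hn⟩ := Nat.exists_eq_add_of_le' (nseq_pos hk hs le_rfl)
  have hT (v) (hv : v ∈ terminals s k) : v.1 + v.2 = n + 1 := (mem_terminals_iff.1 hv).1.trans hn
  have hlayer (c : Fin (s - 1) → Fin 3) := (isW_alph_bet c hs).isLayer_gwE hk hn.symm
  have hsnd (c : Fin (s - 1) → Fin 3) := (isW_alph_bet c hs).snd_image_gwE (k := k)
  have hface {γ} : IsLadderFace s k γ ↔ IsGridFace (n + 1) (terminals s k) γ := by
    rw [isLadderFace_iff_isGridFace, hn]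
  have hnew {p : _ × LGraph} := isLadderFace_newk_iff hs hk hn.symm (c := p.1) (σ := p.2)
  refine ⟨fun p hp => ?_, fun p hp q hq hpq => ?_, fun γ hγ => ?_⟩
  · exact hface.2 (hsnd p.1 ▸ (hnew.1 hp).ugraph_edgeGraph (hlayer p.1))
  · have hgw : gwE s k (alph s p.1) (bet s p.1) = gwE s k (alph s q.1) (bet s q.1) := by
      rw [← edgesFrom_ugraph_edgeGraph (hlayer p.1) (hnew.1 hp),
        ← edgesFrom_ugraph_edgeGraph (hlayer q.1) (hnew.1 hq)]
      exact congrArg (edgesFrom n) hpq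
    have hσ : p.2 = q.2 := by
      rw [← lowerPart_ugraph_edgeGraph (hlayer p.1) (hnew.1 hp),
        ← lowerPart_ugraph_edgeGraph (hlayer q.1) (hnew.1 hq)]
      exact congrArg (lowerPart n) hpq
    exact Prod.ext (((hlayer q.1).existsUnique_gwE_eq hs hk (hsnd q.1)).unique hgw rfl) hσ
  · have hγ := hface.1 hγ
    obtain ⟨c, hc, -⟩ :=
      hγ.isLayer_edgesFrom.existsUnique_gwE_eq hs hk (hγ.snd_image_edgesFrom hT)
    refine ⟨(c, lowerPart n γ), hnew.2 ?_, ?_⟩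
    · rw [hc]
      exact hγ.isGridFace_lowerPart hT
    · change ugraph _ (edgeGraph (gwE s k (alph s c) (bet s c))) = γ
      rw [hc]
      exact hγ.ugraph_lowerPart hT

theorem ldim_glue (hs : 1 ≤ s) (hk : ∀ i < s, 0 < k i) {c : Fin (s - 1) → Fin 3} {σ : LGraph}
    (hσ : IsLadderFace (2 * s - 1) (newk s c k) σ) :
    ldim (glue s k (c, σ)) = wsize s c + ldim σ := by
  obtain ⟨n, hn⟩ := Nat.exists_eq_add_of_le' (nseq_pos hk hs le_rfl)
  have hw := isW_alph_bet c hs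
  have hdim := ((isLadderFace_newk_iff hs hk hn.symm).1 hσ).ldim_ugraph_edgeGraph
    (hw.isLayer_gwE hk hn.symm)
  rw [hw.snd_image_gwE, ncard_terminals hk, hw.ncard_gwE hk] at hdim
  change ldim (glue s k (c, σ)) = ldim σ + ((s + 1 + wsize s c : ℕ) : ℤ) - (s + 1 : ℕ) at hdim
  rw [hdim]
  push_cast
  ring

theorem ncard_vertices (hs : 1 ≤ s) (hk : ∀ i < s, 0 < k i) :
    {γ | IsLadderFace s k γ ∧ ldim γ = 0}.ncard =
      ∑ c ∈ Finset.univ.filter (fun c : Fin (s - 1) → Fin 3 => wsize s c = 0),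
        {σ | IsLadderFace (2 * s - 1) (newk s c k) σ ∧ ldim σ = 0}.ncard := by
  have hbij := (bijOn_glue hs hk).subset_right (r := {γ | IsLadderFace s k γ ∧ ldim γ = 0})
    fun γ => And.left
  have hfin (c : Fin (s - 1) → Fin 3) :
      {σ | IsLadderFace (2 * s - 1) (newk s c k) σ ∧ ldim σ = 0}.Finite :=
    (finite_setOf_isLadderFace _ _).subset fun σ => And.left
  rw [← hbij.ncard_eq, ← ncard_setOf_fst_mem_and_snd_mem _ fun c _ => hfin c]
  congr 1
  ext ⟨c, σ⟩
  simp only [Set.mem_inter_iff, Set.mem_preimage, Set.mem_ofPred_eq, Finset.mem_filter,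
    Finset.mem_univ, true_and]
  constructor
  · rintro ⟨hσ, -, hdim⟩
    have hnonneg := hσ.isGridFace.ldim_nonneg
    rw [ldim_glue hs hk hσ] at hdim
    exact ⟨by omega, hσ, by omega⟩
  · rintro ⟨hc, hσ, hdim⟩
    exact ⟨hσ, (bijOn_glue hs hk).mapsTo hσ, by rw [ldim_glue hs hk hσ, hc, hdim]; rfl⟩

end Decomposition

/-- proof of Lemma 3.7, and Corollary 1.14. For `k ∈ ℤ^s_{≥1}`
there is a bijection `(w, σ) ↦ σ ∪ g_w` between pairs of an element
`w ∈ W_{s-1}` (encoded by `c : Fin (s-1) → Fin 3`) together with a face `σ` of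
`Γ_{r_w(k) * w̃}`, and faces of `Γ_k`; it satisfies
`dim (σ ∪ g_w) = |w| + dim σ`. Consequently the number of vertices satisfies
`V_k = Σ_{w ∈ W_{s-1}, |w| = 0} V_{r_w(k)}`. -/
theorem face_decomposition (s : ℕ) (hs : 1 ≤ s) (k : ℕ → ℕ)
    (hk : ∀ i < s, 0 < k i) :
    (∀ (c : Fin (s - 1) → Fin 3) (σ : LGraph),
      IsLadderFace (2 * s - 1) (newk s c k) σ →
        IsLadderFace s k (ugraph σ (gwGraph3 s k c)) ∧
        ldim (ugraph σ (gwGraph3 s k c)) = (wsize s c : ℤ) + ldim σ) ∧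
    (∀ γ : LGraph, IsLadderFace s k γ →
      ∃! p : (Fin (s - 1) → Fin 3) × LGraph,
        IsLadderFace (2 * s - 1) (newk s p.1 k) p.2 ∧
        γ = ugraph p.2 (gwGraph3 s k p.1)) ∧
    (Set.ncard {γ : LGraph | IsLadderFace s k γ ∧ ldim γ = 0} =
      ∑ c ∈ Finset.univ.filter (fun c : Fin (s - 1) → Fin 3 => wsize s c = 0),
        Set.ncard {γ : LGraph | IsLadderFace (2 * s - 1) (newk s c k) γ ∧ ldim γ = 0}) := by
  have hbij := bijOn_glue hs hk
  refine ⟨fun c σ hσ => ⟨hbij.mapsTo (x := (c, σ)) hσ, ldim_glue hs hk hσ⟩, fun γ hγ => ?_,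
    ncard_vertices hs hk⟩
  obtain ⟨p, hp, rfl⟩ := hbij.surjOn hγ
  exact ⟨p, ⟨hp, rfl⟩, fun q hq => hbij.injOn hq.1 hp hq.2.symm⟩
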